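/- arXiv:2403.03724 — 2 statements merged into one kernel-verified Lean document; each statement's English description precedes it below -/
import Mathlib

section
/- Let B be a binary tree on V ∪ H with cost(B) ≤ C. Then Σ_{{u,v} ∈ E} D_B(u, v) ≤ X + 2m. -/
/-!
Call `h_2` and `h_{n+1}` the hubs and `h_1, …, h_{n+2}` the spine. The demand `d₂` is so large that
a tree of cost at most `C` cannot afford a consecutive pair of the spine at distance two or more, so
the spine is a path of the tree. The part of it between the hubs has length `n - 1`, and in a tree
the distances from a vertex off a path of length `ℓ` to the two ends of the path add up to at least
`ℓ + 2`: they add up to at least `ℓ`, with the same parity because trees are bipartite, and equality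
would put the vertex on the path. Hence the spine costs at least `(n + 1) d₂`, the pairs of a hub
and a vertex of `V` cost at least `n (n + 1) d₁`, and at most `X + 2m` of the budget `C` is left for
the edges of `G`.

For `n = 1` the two hubs coincide, but then `G` has no edges.
-/

open Finset SimpleGraph

/-- Vertex set `V ∪ H`: `V = {v_1, …, v_n}` as `Fin n` (0-indexed) and
`H = {h_1, …, h_{n+2}}` as `Fin (n+2)` (0-indexed, so `h_j` is `Sum.inr ⟨j-1, _⟩`). -/
abbrev Vtx (n : ℕ) : Type := Fin n ⊕ Fin (n + 2)

/-- The demand matrix of the reduction, with `d₁ = X + 2m + 1` and `d₂ = (n² + n + 1)·d₁`: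
demand `1` between endpoints of edges of `G`, demand `d₁` between each `v ∈ V` and each of
`h_2`, `h_{n+1}` (0-indexed: `1` and `n`), demand `d₂` between consecutive `h`'s, else `0`. -/
def demand (n m X : ℕ) (G : SimpleGraph (Fin n)) [DecidableRel G.Adj] :
    Vtx n → Vtx n → ℕ
  | Sum.inl i, Sum.inl j => if G.Adj i j then 1 else 0
  | Sum.inl _, Sum.inr j => if j.val = 1 ∨ j.val = n then X + 2 * m + 1 else 0
  | Sum.inr j, Sum.inl _ => if j.val = 1 ∨ j.val = n then X + 2 * m + 1 else 0
  | Sum.inr i, Sum.inr j =>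
      if i.val + 1 = j.val ∨ j.val + 1 = i.val then (n ^ 2 + n + 1) * (X + 2 * m + 1) else 0

lemma demand_symm (n m X : ℕ) (G : SimpleGraph (Fin n)) [DecidableRel G.Adj]
    (x y : Vtx n) : demand n m X G x y = demand n m X G y x := by
  cases x <;> cases y <;> simp [demand, SimpleGraph.adj_comm, or_comm]

/-- The cost of a network `B`: the sum over unordered pairs `{x, y}` of
`W(x,y) · D_B(x,y)` (diagonal pairs contribute `0` since `D_B(x,x) = 0`). -/
noncomputable def cost (n m X : ℕ) (G : SimpleGraph (Fin n)) [DecidableRel G.Adj]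
    (B : SimpleGraph (Vtx n)) : ℕ :=
  ∑ p ∈ (Finset.univ : Finset (Vtx n)).sym2,
    Sym2.lift ⟨fun x y => demand n m X G x y * B.dist x y,
      fun x y => by simp only []; rw [demand_symm, B.dist_comm]⟩ p

/-- The constant `C = (n+1)·d₂ + n·(n+1)·d₁ + X + 2m`. -/
def Cbound (n m X : ℕ) : ℕ :=
  (n + 1) * ((n ^ 2 + n + 1) * (X + 2 * m + 1)) + n * (n + 1) * (X + 2 * m + 1) + X + 2 * m

/-- A binary tree: a connected acyclic simple graph all of whose degrees are at most 3. -/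
def IsBinaryTree {n : ℕ} (B : SimpleGraph (Vtx n)) : Prop :=
  B.IsTree ∧ ∀ x : Vtx n, (B.neighborSet x).ncard ≤ 3

section Tree

variable {V : Type*} {T : SimpleGraph V} {a b v : V}

lemma length_eq_dist_of_isPath (hT : T.IsAcyclic) {p : T.Walk a b} (hp : p.IsPath) :
    p.length = T.dist a b := by
  obtain ⟨q, hq, hq_length⟩ := p.reachable.exists_path_of_dist
  have := hT.subsingleton_path a b
  have hpq : p = q := congrArg Subtype.val (Subsingleton.elim (⟨p, hp⟩ : T.Path a b) ⟨q, hq⟩)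
  rw [hpq, hq_length]

lemma even_dist_add_dist_iff (hT : T.IsBipartite) (hconn : T.Connected) (a b v : V) :
    Even (T.dist v a + T.dist v b) ↔ Even (T.dist a b) := by
  obtain ⟨coloring⟩ := hT
  let c : T.Coloring Bool := T.recolorOfEquiv finTwoEquiv coloring
  have even_dist_iff (x y : V) : Even (T.dist x y) ↔ (c x ↔ c y) := by
    obtain ⟨p, hp⟩ := hconn.exists_walk_length_eq_dist x y
    rw [← hp, c.even_length_iff_congr p]
  simp only [Nat.even_add, even_dist_iff]
  tauto

lemma mem_support_of_dist_add_dist_eq (hT : T.IsTree) {p : T.Walk a b} (hp : p.IsPath)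
    (h : T.dist v a + T.dist v b = T.dist a b) : v ∈ p.support := by
  obtain ⟨q, hq⟩ := hT.connected.exists_walk_length_eq_dist a v
  obtain ⟨r, hr⟩ := hT.connected.exists_walk_length_eq_dist v b
  have hqr : (q.append r).IsPath := by
    apply Walk.isPath_of_length_eq_dist
    rw [Walk.length_append, hq, hr, T.dist_comm, h]
  rw [(hT.existsUnique_path a b).unique hp hqr, Walk.mem_support_append_iff]
  exact Or.inl q.end_mem_support

lemma length_add_two_le_dist_add_dist (hT : T.IsTree) {p : T.Walk a b} (hp : p.IsPath)
    (hv : v ∉ p.support) : p.length + 2 ≤ T.dist v a + T.dist v b := by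
  have hne : T.dist v a + T.dist v b ≠ T.dist a b :=
    fun h => hv (mem_support_of_dist_add_dist_eq hT hp h)
  have htriangle : T.dist a b ≤ T.dist v a + T.dist v b := by
    rw [T.dist_comm (u := v) (v := a)]
    exact hT.connected.dist_triangle
  have hparity := even_dist_add_dist_iff hT.isBipartite hT.connected a b v
  rw [length_eq_dist_of_isPath hT.isAcyclic hp]
  rw [Nat.even_iff, Nat.even_iff] at hparity
  omega

end Tree

section PathGraph

variable {V : Type*} {k : ℕ}

lemma val_le_add_length_of_pathGraph_walk {i j : Fin k} (w : (pathGraph k).Walk i j) :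
    (j : ℕ) ≤ i + w.length := by
  induction w with
  | nil => exact le_rfl
  | cons h w ih =>
    rw [pathGraph_adj] at h
    rw [Walk.length_cons]
    omega

/-- The homomorphism from a path graph given by a sequence with consecutive entries adjacent. -/
def pathGraphHomOfAdj {G : SimpleGraph V} (f : Fin (k + 1) → V)
    (hf : ∀ i : Fin k, G.Adj (f i.castSucc) (f i.succ)) : pathGraph (k + 1) →g G where
  toFun := f
  map_rel' {i j} hij := by
    have adj_of_succ {i j : Fin (k + 1)} (h : (i : ℕ) + 1 = j) : G.Adj (f i) (f j) := by
      have hj : (⟨i, by omega⟩ : Fin k).succ = j := Fin.ext h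
      exact hj ▸ hf ⟨i, by omega⟩
    exact (pathGraph_adj.mp hij).elim adj_of_succ fun h => (adj_of_succ h).symm

lemma val_add_two_le_dist_add_dist_of_pathGraph {T : SimpleGraph V} (hT : T.IsTree)
    {f : pathGraph k →g T} (hf : Function.Injective f) {v : V} (hv : v ∉ Set.range f)
    (i j : Fin k) :
    (j : ℕ) + 2 ≤ i + (T.dist v (f i) + T.dist v (f j)) := by
  obtain ⟨p, hp, -⟩ := (pathGraph_preconnected k i j).exists_path_of_dist
  have hv_support : v ∉ (p.map f).support := by
    rw [Walk.support_map, List.mem_map]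
    exact fun ⟨x, _, hx⟩ => hv ⟨x, hx⟩
  have hdist := length_add_two_le_dist_add_dist hT (hp.map hf) hv_support
  have hlength := val_le_add_length_of_pathGraph_walk p
  rw [Walk.length_map] at hdist
  omega

end PathGraph

section Sums

lemma sum_comp_le_sum_of_injective {ι κ M : Type*} [Fintype ι] [Fintype κ] [AddCommMonoid M]
    [PartialOrder M] [CanonicallyOrderedAdd M] {f : ι → κ} (hf : Function.Injective f)
    (F : κ → M) : ∑ i, F (f i) ≤ ∑ k, F k :=
  calc ∑ i, F (f i) = ∑ k ∈ univ.map ⟨f, hf⟩, F k := (sum_map univ ⟨f, hf⟩ F).symm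
    _ ≤ ∑ k, F k := sum_le_sum_of_subset (subset_univ _)

variable {V ι : Type*} [Fintype ι] {B : SimpleGraph V} {f g : ι → V}

lemma card_le_sum_dist (hB : B.Connected) (hfg : ∀ i, f i ≠ g i) :
    Fintype.card ι ≤ ∑ i, B.dist (f i) (g i) := by
  rw [Fintype.card_eq_sum_ones]
  exact sum_le_sum fun i _ => hB.pos_dist_of_ne (hfg i)

lemma adj_of_sum_dist_le_card (hB : B.Connected) (hfg : ∀ i, f i ≠ g i)
    (hle : ∑ i, B.dist (f i) (g i) ≤ Fintype.card ι) (i : ι) : B.Adj (f i) (g i) := by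
  have hsum : ∑ _i : ι, 1 = ∑ i, B.dist (f i) (g i) := by
    simpa using (card_le_sum_dist hB hfg).antisymm hle
  have hone : 1 = B.dist (f i) (g i) :=
    (sum_eq_sum_iff_of_le fun i _ => hB.pos_dist_of_ne (hfg i)).mp hsum i (mem_univ i)
  exact dist_eq_one_iff_adj.mp hone.symm

end Sums

section Reduction

/-- The demand `d₁` between a vertex of `V` and a hub. -/
def d₁ (m X : ℕ) : ℕ := X + 2 * m + 1

/-- The demand `d₂` between consecutive vertices of the spine `H`. -/
def d₂ (n m X : ℕ) : ℕ := (n ^ 2 + n + 1) * d₁ m X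

/-- The indices of the two hubs `h_2` (`false`) and `h_{n+1}` (`true`) in `H`, which coincide for
`n = 1`. -/
def hub (n : ℕ) (b : Bool) : Fin (n + 2) := bif b then (Fin.last n).castSucc else 1

/-- The total distance in `B` between the ends of the edges of `G`. -/
noncomputable def edgeDistSum {n : ℕ} (G : SimpleGraph (Fin n)) [DecidableRel G.Adj]
    (B : SimpleGraph (Vtx n)) : ℕ :=
  ∑ e ∈ G.edgeFinset,
    Sym2.lift ⟨fun a b => B.dist (Sum.inl a) (Sum.inl b), fun _ _ => B.dist_comm⟩ e

/-- The total distance in `B` between the vertices of `V` and the two hubs. -/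
noncomputable def hubDistSum {n : ℕ} (B : SimpleGraph (Vtx n)) : ℕ :=
  ∑ v : Fin n, ∑ b, B.dist (Sum.inl v) (Sum.inr (hub n b))

/-- The total distance in `B` between consecutive vertices of the spine `H`. -/
noncomputable def spineDistSum {n : ℕ} (B : SimpleGraph (Vtx n)) : ℕ :=
  ∑ i : Fin (n + 1), B.dist (Sum.inr i.castSucc) (Sum.inr i.succ)

/-- The contribution of an unordered pair of vertices to the cost of `B`. -/
noncomputable def pairCost (n m X : ℕ) (G : SimpleGraph (Fin n)) [DecidableRel G.Adj]
    (B : SimpleGraph (Vtx n)) : Sym2 (Vtx n) → ℕ :=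
  Sym2.lift ⟨fun x y => demand n m X G x y * B.dist x y,
    fun x y => congrArg₂ (· * ·) (demand_symm n m X G x y) B.dist_comm⟩

/-- The pairs of positive demand: edges of `G`, pairs of a vertex of `V` and a hub, and consecutive
pairs of the spine. -/
def demandPair (n : ℕ) (G : SimpleGraph (Fin n)) [DecidableRel G.Adj] :
    G.edgeFinset ⊕ ((Fin n × Bool) ⊕ Fin (n + 1)) → Sym2 (Vtx n) :=
  Sum.elim (fun e => e.1.map Sum.inl)
    (Sum.elim (fun p => s(Sum.inl p.1, Sum.inr (hub n p.2)))
      (fun i => s(Sum.inr i.castSucc, Sum.inr i.succ)))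

lemma hub_injective {n : ℕ} (hn : 2 ≤ n) : Function.Injective (hub n) := by
  have hne : hub n true ≠ hub n false := by
    simp only [hub, cond_true, cond_false, ne_eq, Fin.ext_iff, Fin.val_castSucc, Fin.val_last,
      Fin.val_one]
    omega
  rintro (_ | _) (_ | _) h
  exacts [rfl, absurd h.symm hne, absurd h hne, rfl]

lemma demandPair_injective {n : ℕ} (hn : 2 ≤ n) (G : SimpleGraph (Fin n)) [DecidableRel G.Adj] :
    Function.Injective (demandPair n G) := by
  refine .sumElim ?edges (.sumElim ?hubs ?spine ?hubs_ne_spine) ?edges_ne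
  case edges => exact (Sym2.map.injective Sum.inl_injective).comp Subtype.val_injective
  case hubs =>
    rintro ⟨v, b⟩ ⟨v', b'⟩ h
    simpa [(hub_injective hn).eq_iff] using h
  case spine =>
    intro i j h
    simp only [Sym2.eq_iff, Sum.inr.injEq, Fin.ext_iff, Fin.val_castSucc, Fin.val_succ] at h
    omega
  case hubs_ne_spine => simp
  case edges_ne =>
    rintro ⟨e, he⟩ (p | i)
    all_goals
      induction e
      simp

variable {n : ℕ} (m X : ℕ) (G : SimpleGraph (Fin n)) [DecidableRel G.Adj] (B : SimpleGraph (Vtx n))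

lemma pairCost_edge (e : G.edgeFinset) : pairCost n m X G B (e.1.map Sum.inl) =
    Sym2.lift ⟨fun a b => B.dist (Sum.inl a) (Sum.inl b), fun _ _ => B.dist_comm⟩ e.1 := by
  obtain ⟨e, he⟩ := e
  induction e with
  | _ a b =>
    have hab : G.Adj a b := by simpa using he
    simp [pairCost, demand, hab]

lemma pairCost_hub (v : Fin n) (b : Bool) : pairCost n m X G B s(Sum.inl v, Sum.inr (hub n b)) =
    d₁ m X * B.dist (Sum.inl v) (Sum.inr (hub n b)) := by
  cases b <;> simp [pairCost, demand, hub, d₁]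

lemma pairCost_spine (i : Fin (n + 1)) : pairCost n m X G B s(Sum.inr i.castSucc, Sum.inr i.succ) =
    d₂ n m X * B.dist (Sum.inr i.castSucc) (Sum.inr i.succ) := by
  simp [pairCost, demand, d₁, d₂]

lemma edge_add_hub_add_spine_le_cost (hn : 2 ≤ n) :
    edgeDistSum G B + (d₁ m X * hubDistSum B + d₂ n m X * spineDistSum B) ≤ cost n m X G B :=
  calc edgeDistSum G B + (d₁ m X * hubDistSum B + d₂ n m X * spineDistSum B)
      = ∑ i, pairCost n m X G B (demandPair n G i) := by
        simp only [demandPair, Fintype.sum_sum_type, Fintype.sum_prod_type, Sum.elim_inl,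
          Sum.elim_inr, pairCost_edge, pairCost_hub, pairCost_spine, ← mul_sum]
        rw [edgeDistSum, hubDistSum, spineDistSum, ← sum_coe_sort]
    _ ≤ ∑ p, pairCost n m X G B p := sum_comp_le_sum_of_injective (demandPair_injective hn G) _
    _ = cost n m X G B := by
        rw [cost, sym2_univ]
        rfl

lemma Cbound_eq (n : ℕ) :
    Cbound n m X = X + 2 * m + (d₁ m X * (n * (n + 1)) + d₂ n m X * (n + 1)) := by
  rw [Cbound, d₂, d₁]
  ring

lemma Cbound_lt (n : ℕ) : Cbound n m X < d₂ n m X * (n + 2) :=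
  calc Cbound n m X = X + 2 * m + (d₁ m X * (n * (n + 1)) + d₂ n m X * (n + 1)) := Cbound_eq m X n
    _ < d₁ m X + (d₁ m X * (n * (n + 1)) + d₂ n m X * (n + 1)) := by
        gcongr
        exact Nat.lt_succ_self _
    _ = d₂ n m X * (n + 2) := by
        rw [d₂]
        ring

variable {m X G B}

lemma spine_ne (i : Fin (n + 1)) : (Sum.inr i.castSucc : Vtx n) ≠ Sum.inr i.succ :=
  Sum.inr_injective.ne i.castSucc_lt_succ.ne

lemma le_spineDistSum (hB : B.Connected) : n + 1 ≤ spineDistSum B := by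
  simpa [spineDistSum] using card_le_sum_dist hB spine_ne

lemma spine_adj_of_cost_le (hn : 2 ≤ n) (hB : B.Connected) (hc : cost n m X G B ≤ Cbound n m X)
    (i : Fin (n + 1)) : B.Adj (Sum.inr i.castSucc) (Sum.inr i.succ) := by
  have hlt : d₂ n m X * spineDistSum B < d₂ n m X * (n + 2) :=
    calc d₂ n m X * spineDistSum B
        ≤ edgeDistSum G B + (d₁ m X * hubDistSum B + d₂ n m X * spineDistSum B) := by omega
      _ ≤ cost n m X G B := edge_add_hub_add_spine_le_cost m X G B hn
      _ ≤ Cbound n m X := hc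
      _ < d₂ n m X * (n + 2) := Cbound_lt m X n
  have hle : spineDistSum B ≤ n + 1 := Nat.le_of_lt_succ (lt_of_mul_lt_mul_left' hlt)
  exact adj_of_sum_dist_le_card hB spine_ne (by simpa [spineDistSum] using hle) i

lemma le_hubDistSum (hB : B.IsTree)
    (hspine : ∀ i : Fin (n + 1), B.Adj (Sum.inr i.castSucc) (Sum.inr i.succ)) :
    n * (n + 1) ≤ hubDistSum B := by
  have hdist (v : Fin n) : n + 1 ≤ ∑ b, B.dist (Sum.inl v) (Sum.inr (hub n b)) := by
    have hv : Sum.inl v ∉ Set.range (Sum.inr : Fin (n + 2) → Vtx n) := by simp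
    have hends : n + 2 ≤ 1 + (B.dist (Sum.inl v) (Sum.inr (hub n false)) +
        B.dist (Sum.inl v) (Sum.inr (hub n true))) :=
      val_add_two_le_dist_add_dist_of_pathGraph hB (f := pathGraphHomOfAdj Sum.inr hspine)
        Sum.inr_injective hv (hub n false) (hub n true)
    rw [Fintype.sum_bool]
    omega
  simpa [hubDistSum] using card_nsmul_le_sum univ _ (n + 1) fun v _ => hdist v

lemma edgeDistSum_eq_zero (hn : n ≤ 1) : edgeDistSum G B = 0 := by
  have : Subsingleton (Fin n) := Fin.subsingleton_iff_le_one.mpr hn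
  have hG : G.edgeFinset = ∅ := edgeFinset_eq_empty.mpr (Subsingleton.elim G ⊥)
  rw [edgeDistSum, hG, sum_empty]

end Reduction

theorem edge_dist_sum_le_general {n : ℕ} (X : ℕ) (G : SimpleGraph (Fin n)) [DecidableRel G.Adj]
    (B : SimpleGraph (Vtx n)) (hB : B.IsTree)
    (hc : cost n #G.edgeFinset X G B ≤ Cbound n #G.edgeFinset X) :
    edgeDistSum G B ≤ X + 2 * #G.edgeFinset := by
  set m := #G.edgeFinset
  obtain hn | hn : n ≤ 1 ∨ 2 ≤ n := by omega
  · exact (edgeDistSum_eq_zero hn).trans_le (Nat.zero_le _)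
  have hspine := spine_adj_of_cost_le hn hB.connected hc
  refine Nat.le_of_add_le_add_right (b := d₁ m X * (n * (n + 1)) + d₂ n m X * (n + 1)) ?_
  calc edgeDistSum G B + (d₁ m X * (n * (n + 1)) + d₂ n m X * (n + 1))
      ≤ edgeDistSum G B + (d₁ m X * hubDistSum B + d₂ n m X * spineDistSum B) := by
        gcongr
        exacts [le_hubDistSum hB hspine, le_spineDistSum hB.connected]
    _ ≤ cost n m X G B := edge_add_hub_add_spine_le_cost m X G B hn
    _ ≤ Cbound n m X := hc
    _ = X + 2 * m + (d₁ m X * (n * (n + 1)) + d₂ n m X * (n + 1)) := Cbound_eq m X n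

/-- Let `B` be a binary tree on `V ∪ H` with `cost(B) ≤ C`.  Then
`Σ_{{u,v} ∈ E} D_B(u, v) ≤ X + 2m`. -/
theorem edge_dist_sum_le (n m X : ℕ) (hn : 1 ≤ n) (G : SimpleGraph (Fin n))
    [DecidableRel G.Adj] (hm : G.edgeFinset.card = m)
    (B : SimpleGraph (Vtx n)) (hB : IsBinaryTree B)
    (hc : cost n m X G B ≤ Cbound n m X) :
    (∑ e ∈ G.edgeFinset,
      Sym2.lift ⟨fun a b => B.dist (Sum.inl a) (Sum.inl b),
        fun a b => by simp only []; rw [B.dist_comm]⟩ e) ≤ X + 2 * m := by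
  subst hm
  exact edge_dist_sum_le_general X G B hB.1 hc
end

section
/- Let B be a binary tree on V ∪ H with cost(B) ≤ C, and let φ: V → {1, …, n} be the bijection sending each v ∈ V to j − 1, where h_j (2 ≤ j ≤ n+1) is the unique neighbor of v among {h_2, …, h_{n+1}} in B. Then for all distinct u, v ∈ V, D_B(u, v) = |φ(u) − φ(v)| + 2, and consequently the linear arrangement cost of φ is at most X. -/
open Finset SimpleGraph

/-!
Write `P` for the path graph on the `h`'s, and measure a map `f` from the vertices of a graph `A`
into a graph `B` by its layout cost, the total `B`-length of the edges of `A`.  For `n ≠ 1` the cost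
of `B` is the sum of the layout cost of `G`, `d₂` times the layout cost of `P`, and `d₁` times the
sum of the distances from all `v` to `h_2` and `h_{n+1}`; for `n = 1` the graph `G` has no edges.

Each of the `n + 1` edges of `P` has length at least `1`, and `(n + 2) d₂ > C`, so in a cheap tree
all of them have length exactly `1`: the `h`'s form a path of `B`.  Paths in a tree are unique, so
running along this path is the shortest way between two pendant vertices `u` and `v`; this gives
`D_B(u, v) = |φ(u) - φ(v)| + 2`, and in the same way `D_B(v, h_2) + D_B(v, h_{n+1}) ≥ n + 1`.  The
`d₁`- and `d₂`-parts of `C` are therefore used up, and the layout cost of `G` in `B`, which is the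
linear arrangement cost of `φ` plus `2m`, is at most the remaining `X + 2m`.
-/

lemma sum_sum_sym2_mk {α M : Type*} [AddCommMonoid M] (s : Finset α) (f : Sym2 α → M)
    (hf : ∀ x ∈ s, f s(x, x) = 0) :
    ∑ x ∈ s, ∑ y ∈ s, f s(x, y) = 2 • ∑ p ∈ s.sym2, f p := by
  induction s using Finset.cons_induction with
  | empty => simp
  | cons a s ha ih =>
    have hswap : ∑ x ∈ s, f s(x, a) = ∑ y ∈ s, f s(a, y) :=
      sum_congr rfl fun x _ ↦ by rw [Sym2.eq_swap]
    simp only [sym2_cons, sum_disjUnion, sum_map, sum_cons, sum_add_distrib, hswap,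
      ih fun x hx ↦ hf x (mem_cons_of_mem hx), hf a (mem_cons_self a s), Sym2.mkEmbedding_apply,
      smul_add, two_nsmul, zero_add]
    abel

lemma sum_sum_adj {α M : Type*} [Fintype α] [AddCommMonoid M] (A : SimpleGraph α)
    [DecidableRel A.Adj] [Fintype A.edgeSet] (f : Sym2 α → M) :
    (∑ x, ∑ y, if A.Adj x y then f s(x, y) else 0) = 2 • ∑ e ∈ A.edgeFinset, f e := by
  classical
  have h := sum_sum_sym2_mk univ (fun p ↦ if p ∈ A.edgeFinset then f p else 0) (by simp)
  rw [sym2_univ, sum_ite_mem, univ_inter] at h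
  simpa only [mem_edgeFinset, mem_edgeSet] using h

section LayoutCost

variable {α β : Type*} (A : SimpleGraph α) [Fintype A.edgeSet] (B : SimpleGraph β) (f : α → β)

/-- The layout cost of a map `f` from the vertices of `A` to those of `B`: the total length in `B`
of the edges of `A`.  The linear arrangement cost is the case where `B` is a path graph. -/
noncomputable def layoutCost : ℕ :=
  ∑ e ∈ A.edgeFinset, Sym2.lift ⟨fun x y ↦ B.dist (f x) (f y), fun _ _ ↦ B.dist_comm⟩ e

variable {A B f}

lemma two_mul_layoutCost [Fintype α] [DecidableRel A.Adj] :
    2 * layoutCost A B f = ∑ x, ∑ y, if A.Adj x y then B.dist (f x) (f y) else 0 :=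
  (sum_sum_adj A (Sym2.lift ⟨fun x y ↦ B.dist (f x) (f y), fun _ _ ↦ B.dist_comm⟩)).symm

lemma card_edgeFinset_le_layoutCost (hB : B.Connected) (hf : f.Injective) :
    #A.edgeFinset ≤ layoutCost A B f := by
  rw [card_eq_sum_ones]
  refine sum_le_sum fun e he ↦ ?_
  induction e with | _ x y
  exact hB.pos_dist_of_ne (hf.ne (mem_edgeFinset.1 he).ne)

lemma le_comap_of_layoutCost_le (hB : B.Connected) (hf : f.Injective)
    (h : layoutCost A B f ≤ #A.edgeFinset) : A ≤ B.comap f := by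
  intro x y hxy
  by_contra hadj
  refine h.not_gt ?_
  rw [card_eq_sum_ones]
  refine sum_lt_sum (fun e he ↦ ?_) ⟨s(x, y), mem_edgeFinset.2 hxy,
    hB.one_lt_dist_of_ne_of_not_adj (hf.ne hxy.ne) hadj⟩
  induction e with | _ x y
  exact hB.pos_dist_of_ne (hf.ne (mem_edgeFinset.1 he).ne)

lemma layoutCost_eq_add_of_dist_eq_add {γ : Type*} {B' : SimpleGraph γ} {g : α → γ} {c : ℕ}
    (h : ∀ x y, A.Adj x y → B.dist (f x) (f y) = B'.dist (g x) (g y) + c) :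
    layoutCost A B f = layoutCost A B' g + c * #A.edgeFinset := by
  rw [layoutCost, layoutCost, mul_comm, ← smul_eq_mul, ← sum_const, ← sum_add_distrib]
  refine sum_congr rfl fun e he ↦ ?_
  induction e with | _ x y
  exact h x y (mem_edgeFinset.1 he)

end LayoutCost

instance decidableRelPathGraphAdj (n : ℕ) : DecidableRel (pathGraph n).Adj :=
  fun _ _ ↦ decidable_of_iff' _ pathGraph_adj

lemma le_card_edgeFinset_pathGraph (n : ℕ) : n ≤ #(pathGraph (n + 1)).edgeFinset := by
  have h := (pathGraph_connected n).card_vert_le_card_edgeSet_add_one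
  rw [Nat.card_eq_fintype_card, Nat.card_eq_fintype_card, Fintype.card_fin,
    ← edgeFinset_card] at h
  omega

lemma natAbs_sub_le_length_pathGraph {n : ℕ} {i j : Fin n} (p : (pathGraph n).Walk i j) :
    ((i : ℤ) - j).natAbs ≤ p.length := by
  induction p with
  | nil => simp
  | cons hadj p ih =>
    rw [pathGraph_adj] at hadj
    rw [Walk.length_cons]
    omega

lemma dist_pathGraph {n : ℕ} (i j : Fin n) :
    (pathGraph n).dist i j = ((i : ℤ) - j).natAbs := by
  apply le_antisymm
  · wlog hij : i ≤ j generalizing i j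
    · rw [dist_comm, ← Int.natAbs_neg, neg_sub]
      exact this j i (le_of_not_ge hij)
    obtain ⟨k, hk⟩ := Nat.exists_eq_add_of_le (Fin.le_def.1 hij)
    induction k generalizing j with
    | zero => simp [Fin.ext hk]
    | succ k ih =>
      let l : Fin n := ⟨i + k, by omega⟩
      have hlj : (pathGraph n).Adj l j := pathGraph_adj.2 (.inl hk.symm)
      have htri : (pathGraph n).dist i j ≤ (pathGraph n).dist i l + 1 := by
        simpa [dist_eq_one_iff_adj.2 hlj] using
          (pathGraph_preconnected n i l).dist_triangle_left j
      have hil := ih l (Nat.le_add_right i k) rfl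
      simp only [l] at hil htri
      omega
  · obtain ⟨p, hp⟩ := (pathGraph_preconnected n i j).exists_walk_length_eq_dist
    exact hp ▸ natAbs_sub_le_length_pathGraph p

section Acyclic

variable {α β : Type*} {A : SimpleGraph α} {B : SimpleGraph β}

lemma dist_eq_length_of_isAcyclic (hB : B.IsAcyclic) {u v : β} {p : B.Walk u v} (hp : p.IsPath) :
    B.dist u v = p.length := by
  obtain ⟨q, hq, hlen⟩ := p.reachable.exists_path_of_dist
  have hpq : p = q := congrArg Subtype.val ((hB.subsingleton_path u v).elim ⟨p, hp⟩ ⟨q, hq⟩)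
  rw [hpq, hlen]

lemma exists_isPath_length_eq_dist_support_subset_range (f : A →g B) (hf : Function.Injective f)
    {x y : α} (hxy : A.Reachable x y) :
    ∃ p : B.Walk (f x) (f y), p.IsPath ∧ p.length = A.dist x y ∧
      ∀ z ∈ p.support, z ∈ Set.range f := by
  obtain ⟨q, hq, hlen⟩ := hxy.exists_path_of_dist
  refine ⟨q.map f, hq.map hf, by rw [Walk.length_map, hlen], fun z hz ↦ ?_⟩
  rw [Walk.support_map, List.mem_map] at hz
  exact hz.imp fun _ h ↦ h.2

lemma dist_pendant (hB : B.IsAcyclic) (f : A →g B) (hf : Function.Injective f) {x y : α}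
    (hxy : A.Reachable x y) {u : β} (hu : u ∉ Set.range f) (hux : B.Adj u (f x)) :
    B.dist u (f y) = A.dist x y + 1 := by
  obtain ⟨p, hp, hlen, hsupp⟩ := exists_isPath_length_eq_dist_support_subset_range f hf hxy
  rw [dist_eq_length_of_isAcyclic hB (hp.cons (h := hux) (mt (hsupp u) hu)), Walk.length_cons, hlen]

lemma dist_pendant_pendant (hB : B.IsAcyclic) (f : A →g B) (hf : Function.Injective f) {x y : α}
    (hxy : A.Reachable x y) {u v : β} (huv : u ≠ v) (hu : u ∉ Set.range f) (hv : v ∉ Set.range f)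
    (hux : B.Adj u (f x)) (hvy : B.Adj v (f y)) :
    B.dist u v = A.dist x y + 2 := by
  obtain ⟨p, hp, hlen, hsupp⟩ := exists_isPath_length_eq_dist_support_subset_range f hf hxy
  have hv' : v ∉ (Walk.cons hux p).support := by
    rw [Walk.support_cons, List.mem_cons, not_or]
    exact ⟨huv.symm, mt (hsupp v) hv⟩
  have hpath : ((Walk.cons hux p).concat hvy.symm).IsPath :=
    (hp.cons (mt (hsupp u) hu)).concat hv' hvy.symm
  rw [dist_eq_length_of_isAcyclic hB hpath, Walk.length_concat, Walk.length_cons, hlen]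

end Acyclic

section Cost

variable {n m X : ℕ} {G : SimpleGraph (Fin n)} [DecidableRel G.Adj] {B : SimpleGraph (Vtx n)}

/-- The sum of the distances from the vertices in `V` to the anchors `h_2` and `h_{n+1}`, which
`cost` weighs with `d₁`. -/
noncomputable def anchorDist (B : SimpleGraph (Vtx n)) : ℕ :=
  ∑ v : Fin n, (B.dist (.inl v) (.inr 1) + B.dist (.inl v) (.inr ⟨n, by omega⟩))

lemma two_mul_cost : 2 * cost n m X G B = ∑ x, ∑ y, demand n m X G x y * B.dist x y :=
  (sum_sum_sym2_mk univ (Sym2.lift ⟨fun x y ↦ demand n m X G x y * B.dist x y,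
    fun x y ↦ by simp only [demand_symm n m X G x y, B.dist_comm]⟩) (by simp)).symm

lemma sum_demand_inl_inl :
    ∑ u, ∑ v, demand n m X G (.inl u) (.inl v) * B.dist (.inl u) (.inl v) =
      2 * layoutCost G B Sum.inl := by
  simp only [two_mul_layoutCost, demand, ite_mul, one_mul, zero_mul]

lemma sum_demand_inr_inr :
    ∑ i, ∑ j, demand n m X G (.inr i) (.inr j) * B.dist (.inr i) (.inr j) =
      2 * ((n ^ 2 + n + 1) * (X + 2 * m + 1) * layoutCost (pathGraph (n + 2)) B Sum.inr) := by
  rw [mul_left_comm, two_mul_layoutCost]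
  simp only [mul_sum, demand, pathGraph_adj, ite_mul, mul_ite, zero_mul, mul_zero]

/-- For `n = 1` the anchors coincide: `anchorDist` counts twice a pair that `cost` counts once. -/
lemma sum_demand_inl_inr (hn : n ≠ 1) :
    ∑ v, ∑ j, demand n m X G (.inl v) (.inr j) * B.dist (.inl v) (.inr j) =
      (X + 2 * m + 1) * anchorDist B := by
  have hne : (1 : Fin (n + 2)) ≠ ⟨n, by omega⟩ := by simpa [Fin.ext_iff] using hn.symm
  have hfilter : ({j | j.val = 1 ∨ j.val = n} : Finset (Fin (n + 2))) = {1, ⟨n, by omega⟩} := by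
    ext j
    simp [Fin.ext_iff]
  simp only [demand, ite_mul, zero_mul, ← sum_filter, hfilter, sum_pair hne, ← mul_add, ← mul_sum,
    anchorDist]

lemma cost_eq (hn : n ≠ 1) :
    cost n m X G B = layoutCost G B Sum.inl + (X + 2 * m + 1) * anchorDist B +
      (n ^ 2 + n + 1) * (X + 2 * m + 1) * layoutCost (pathGraph (n + 2)) B Sum.inr := by
  have hcost := two_mul_cost (m := m) (X := X) (G := G) (B := B)
  have hinr_inl : ∑ j, ∑ v, demand n m X G (.inr j) (.inl v) * B.dist (.inr j) (.inl v) =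
      (X + 2 * m + 1) * anchorDist B := by
    rw [sum_comm]
    simpa only [demand_symm n m X G (.inl _) (.inr _), B.dist_comm (u := .inl _) (v := .inr _),
      anchorDist] using sum_demand_inl_inr (m := m) (X := X) (G := G) (B := B) hn
  simp only [Fintype.sum_sum_type, sum_add_distrib, sum_demand_inl_inl, sum_demand_inl_inr hn,
    hinr_inl, sum_demand_inr_inr] at hcost
  linarith

lemma layoutCost_inr_le (hn : n ≠ 1) (hc : cost n m X G B ≤ Cbound n m X) :
    layoutCost (pathGraph (n + 2)) B Sum.inr ≤ n + 1 := by
  by_contra! h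
  rw [cost_eq hn, Cbound] at hc
  have hlower : (n ^ 2 + n + 1) * (X + 2 * m + 1) * (n + 2) ≤
      (n ^ 2 + n + 1) * (X + 2 * m + 1) * layoutCost (pathGraph (n + 2)) B Sum.inr :=
    Nat.mul_le_mul_left _ h
  have hupper := (Nat.le_add_left _ _).trans hc
  linarith

lemma pathGraph_le_comap_inr (hn : n ≠ 1) (hB : B.Connected)
    (hc : cost n m X G B ≤ Cbound n m X) : pathGraph (n + 2) ≤ B.comap Sum.inr :=
  le_comap_of_layoutCost_le hB Sum.inr_injective <|
    (layoutCost_inr_le hn hc).trans (le_card_edgeFinset_pathGraph (n + 1))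

lemma layoutCost_inl_le (hn : n ≠ 1) (hB : B.Connected) (hanchor : n * (n + 1) ≤ anchorDist B)
    (hc : cost n m X G B ≤ Cbound n m X) : layoutCost G B Sum.inl ≤ X + 2 * m := by
  have hpath : n + 1 ≤ layoutCost (pathGraph (n + 2)) B Sum.inr :=
    (le_card_edgeFinset_pathGraph (n + 1)).trans
      (card_edgeFinset_le_layoutCost hB Sum.inr_injective)
  rw [cost_eq hn, Cbound] at hc
  have hanchor_mul := Nat.mul_le_mul_left (X + 2 * m + 1) hanchor
  have hpath_mul := Nat.mul_le_mul_left ((n ^ 2 + n + 1) * (X + 2 * m + 1)) hpath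
  linarith

section Spine

variable (hB : B.IsAcyclic) (hpath : pathGraph (n + 2) ≤ B.comap Sum.inr)

include hB hpath

lemma dist_inl_inr {v : Fin n} {i : Fin (n + 2)} (hv : B.Adj (.inl v) (.inr i))
    (j : Fin (n + 2)) : B.dist (.inl v) (.inr j) = ((i : ℤ) - j).natAbs + 1 := by
  rw [← dist_pathGraph]
  exact dist_pendant hB ⟨Sum.inr, fun h ↦ hpath h⟩ Sum.inr_injective (pathGraph_preconnected _ i j)
    (by simp) hv

lemma dist_inl_inl {u v : Fin n} (huv : u ≠ v) {i j : Fin (n + 2)}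
    (hu : B.Adj (.inl u) (.inr i)) (hv : B.Adj (.inl v) (.inr j)) :
    B.dist (.inl u) (.inl v) = ((i : ℤ) - j).natAbs + 2 := by
  rw [← dist_pathGraph]
  exact dist_pendant_pendant hB ⟨Sum.inr, fun h ↦ hpath h⟩ Sum.inr_injective
    (pathGraph_preconnected _ i j) (Sum.inl_injective.ne huv) (by simp) (by simp) hu hv

lemma le_anchorDist {ψ : Fin n → Fin (n + 2)} (hψ : ∀ v, B.Adj (.inl v) (.inr (ψ v))) :
    n * (n + 1) ≤ anchorDist B := by
  have h (v : Fin n) : n + 1 ≤ B.dist (.inl v) (.inr 1) + B.dist (.inl v) (.inr ⟨n, by omega⟩) := by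
    rw [dist_inl_inr hB hpath (hψ v), dist_inl_inr hB hpath (hψ v), Fin.val_one]
    dsimp only
    omega
  simpa [anchorDist] using card_nsmul_le_sum univ _ _ fun v _ ↦ h v

end Spine

end Cost

theorem induced_arrangement_cheap_general (n m X : ℕ) (G : SimpleGraph (Fin n))
    [DecidableRel G.Adj] (hm : G.edgeFinset.card = m)
    (B : SimpleGraph (Vtx n)) (hB : B.IsTree)
    (hc : cost n m X G B ≤ Cbound n m X)
    (ψ : Fin n → Fin (n + 2)) (hψ : ∀ v : Fin n, B.Adj (Sum.inl v) (Sum.inr (ψ v))) :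
    (∀ u v : Fin n, u ≠ v →
      B.dist (Sum.inl u) (Sum.inl v) =
        (((ψ u).val : ℤ) - ((ψ v).val : ℤ)).natAbs + 2) ∧
    (∑ e ∈ G.edgeFinset,
      Sym2.lift ⟨fun a b => (((ψ a).val : ℤ) - ((ψ b).val : ℤ)).natAbs,
        fun a b => by simp only []; rw [← Int.natAbs_neg, neg_sub]⟩ e) ≤ X := by
  simp only [← dist_pathGraph]
  change _ ∧ layoutCost G (pathGraph (n + 2)) ψ ≤ X
  obtain rfl | hn := eq_or_ne n 1
  · have hzero : 2 * layoutCost G (pathGraph (1 + 2)) ψ = 0 := by simp [two_mul_layoutCost]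
    exact ⟨fun u v huv ↦ absurd (Subsingleton.elim u v) huv, by omega⟩
  have hpath := pathGraph_le_comap_inr hn hB.connected hc
  have hdist (u v : Fin n) (huv : u ≠ v) :
      B.dist (.inl u) (.inl v) = (pathGraph (n + 2)).dist (ψ u) (ψ v) + 2 := by
    rw [dist_inl_inl hB.isAcyclic hpath huv (hψ u) (hψ v), dist_pathGraph]
  refine ⟨hdist, ?_⟩
  have hanchor := le_anchorDist hB.isAcyclic hpath hψ
  have hlayout := layoutCost_inl_le hn hB.connected hanchor hc
  rw [layoutCost_eq_add_of_dist_eq_add fun u v huv ↦ hdist u v huv.ne, hm] at hlayout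
  omega

/-- Let `B` be a binary tree on `V ∪ H` with `cost(B) ≤ C`, and let `φ`
be the bijection `V → {1, …, n}` sending each `v` to `j − 1`, where `h_j` is the unique
neighbor of `v` among `{h_2, …, h_{n+1}}`.  With `ψ v` the 0-indexed neighbor index
(so the paper's `φ(v) = (ψ v).val ∈ {1, …, n}`), for all distinct `u, v ∈ V` we have
`D_B(u, v) = |φ(u) − φ(v)| + 2`, and the linear arrangement cost of `φ` is at most `X`. -/
theorem induced_arrangement_cheap (n m X : ℕ) (hn : 1 ≤ n) (G : SimpleGraph (Fin n))
    [DecidableRel G.Adj] (hm : G.edgeFinset.card = m)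
    (B : SimpleGraph (Vtx n)) (hB : IsBinaryTree B)
    (hc : cost n m X G B ≤ Cbound n m X)
    (ψ : Fin n → Fin (n + 2))
    (hψ : ∀ v : Fin n, 1 ≤ (ψ v).val ∧ (ψ v).val ≤ n ∧ B.Adj (Sum.inl v) (Sum.inr (ψ v)))
    (hψu : ∀ (v : Fin n) (j : Fin (n + 2)), 1 ≤ j.val → j.val ≤ n →
      B.Adj (Sum.inl v) (Sum.inr j) → j = ψ v)
    (hbij : Set.BijOn (fun v : Fin n => (ψ v).val) Set.univ (Set.Icc 1 n)) :
    (∀ u v : Fin n, u ≠ v →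
      B.dist (Sum.inl u) (Sum.inl v) =
        (((ψ u).val : ℤ) - ((ψ v).val : ℤ)).natAbs + 2) ∧
    (∑ e ∈ G.edgeFinset,
      Sym2.lift ⟨fun a b => (((ψ a).val : ℤ) - ((ψ b).val : ℤ)).natAbs,
        fun a b => by simp only []; rw [← Int.natAbs_neg, neg_sub]⟩ e) ≤ X :=
  induced_arrangement_cheap_general n m X G hm B hB.1 hc ψ fun v ↦ (hψ v).2.2
end
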